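/- arXiv:2212.09087 — 2 statements merged into one kernel-verified Lean document; each statement's English description precedes it below -/
import Mathlib

section
/- Let R be a generically Gorenstein local Cohen–Macaulay Noetherian ring of dimension 1 and let R ⊆ S ⊆ Q(R) be a module finite birational extension. Then the following are equivalent: (i) S is a reflexive R-module and the conductor c_R(S) = (R : S) is a stable ideal; (ii) a finitely generated S-module is reflexive over S if and only if it is a torsion-free S-module that is reflexive over R (i.e. refl(S) = CM(S) ∩ refl(R)). -/
set_option maxHeartbeats 1000000
set_option synthInstance.maxHeartbeats 400000

open CategoryTheory

universe u

/-- The `i`-th Ext module `Ext_A^i(M, N)` over a commutative ring `A`. -/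
noncomputable def ExtModule (A : Type u) [CommRing A] (M N : Type u)
    [AddCommGroup M] [Module A M] [AddCommGroup N] [Module A N] (i : ℕ) : ModuleCat.{u} A :=
  ((Ext A (ModuleCat.{u} A) i).obj (Opposite.op (ModuleCat.of A M))).obj (ModuleCat.of A N)

/-- A module is torsion-free if nonzerodivisors of the ring act injectively. -/
def IsTorsionFreeModule (A : Type*) [CommRing A] (M : Type*) [AddCommGroup M]
    [Module A M] : Prop :=
  ∀ a ∈ nonZeroDivisors A, ∀ m : M, a • m = 0 → m = 0

/-- The grade of an ideal `J`: the length of a maximal regular sequence contained in `J`. -/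
noncomputable def Ideal.grade {A : Type*} [CommRing A] (J : Ideal A) : ℕ∞ :=
  sSup {n : ℕ∞ | ∃ rs : List A, (rs.length : ℕ∞) = n ∧ (∀ r ∈ rs, r ∈ J) ∧
    RingTheory.Sequence.IsWeaklyRegular A rs}

/-- A Cohen–Macaulay local ring: Noetherian local with depth equal to Krull dimension. -/
def IsCohenMacaulayLocalRing (A : Type*) [CommRing A] : Prop :=
  IsNoetherianRing A ∧ ∃ _ : IsLocalRing A,
    ((IsLocalRing.maximalIdeal A).grade : WithBot ℕ∞) = ringKrullDim A

/-- A Cohen–Macaulay ring: Noetherian, all localizations at primes are CM local rings. -/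
def IsCohenMacaulayRing (A : Type*) [CommRing A] : Prop :=
  IsNoetherianRing A ∧ ∀ (p : Ideal A) [p.IsPrime],
    IsCohenMacaulayLocalRing (Localization.AtPrime p)

/-- A Gorenstein local ring: Noetherian local of finite self-injective dimension,
expressed via vanishing of `Ext^{n+1}(A/I, A)` for all ideals `I` (Baer's criterion). -/
def IsGorensteinLocalRing (A : Type u) [CommRing A] : Prop :=
  IsLocalRing A ∧ IsNoetherianRing A ∧
    ∃ n : ℕ, ∀ I : Ideal A, Subsingleton (ExtModule A (A ⧸ I) A (n + 1))

/-- A Gorenstein ring: Noetherian, all localizations at maximal ideals are Gorenstein local. -/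
def IsGorensteinRing (A : Type u) [CommRing A] : Prop :=
  IsNoetherianRing A ∧ ∀ (m : Ideal A) [m.IsMaximal],
    IsGorensteinLocalRing (Localization.AtPrime m)

/-- Generically Gorenstein: the localization at every associated prime is Gorenstein. -/
def IsGenericallyGorenstein (A : Type u) [CommRing A] : Prop :=
  ∀ (p : Ideal A) [p.IsPrime], p ∈ associatedPrimes A A →
    IsGorensteinLocalRing (Localization.AtPrime p)

/-- The trace ideal of a module: the sum of the images of all linear maps to the ring. -/
def traceIdeal (A : Type*) [CommRing A] (M : Type*) [AddCommGroup M] [Module A M] :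
    Ideal A :=
  ⨆ f : M →ₗ[A] A, LinearMap.range f

/-- The image of an ideal inside the total ring of fractions. -/
noncomputable def Ideal.toFrac {A : Type u} [CommRing A] (I : Ideal A) :
    Submodule A (FractionRing A) :=
  Submodule.map (Algebra.linearMap A (FractionRing A)) I

/-- The conductor `(R : S)` of a birational extension `R ⊆ S ⊆ Q(R)`,
as a submodule of the total ring of fractions. -/
noncomputable def conductorFrac (R : Type u) [CommRing R]
    (S : Subalgebra R (FractionRing R)) : Submodule R (FractionRing R) :=
  (1 : Submodule R (FractionRing R)) / Subalgebra.toSubmodule S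

/-- `M ∈ Ω CM(A)`: there is an exact sequence `0 → M → P → N → 0` with `P` a finitely
generated projective `A`-module and `N` a finitely generated torsion-free
(equivalently, over a 1-dimensional CM ring, maximal Cohen–Macaulay) `A`-module. -/
def InSyzygyOfCM (A : Type u) [CommRing A] (M : Type u) [AddCommGroup M] [Module A M] :
    Prop :=
  ∃ (P N : Type u) (_ : AddCommGroup P) (_ : Module A P) (_ : AddCommGroup N)
    (_ : Module A N), Module.Projective A P ∧ Module.Finite A P ∧ Module.Finite A N ∧
      IsTorsionFreeModule A N ∧
      ∃ (f : M →ₗ[A] P) (g : P →ₗ[A] N),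
        Function.Injective f ∧ Function.Surjective g ∧ LinearMap.range f = LinearMap.ker g

/-
Multiplication identifies `Hom_R(S, R)` with the conductor `c = (R : S)`, and reflexivity of `S`
gives `(c : c) = (R : c S) = (R : c) = S`. Hence, for reflexive `S`, the conductor is stable iff
`c = a S` for a unit `a` of `Q(R)`, that is, iff `Hom_R(S, R)` is free on one functional `t`. In
that case composition with `t` is an isomorphism `Hom_S(M, S) ≃ Hom_R(M, R)` for every `S`-module
`M`, compatible with biduality, so `M` is reflexive over `S` iff it is reflexive over `R`.

Conversely, (ii) applied to `S` shows that `S` is reflexive over `R`. Then so is `c ≃ Hom_R(S, R)`,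
and (ii) applied to `c` shows that it is reflexive over `S`. With `T = c (S : c)`,
`(S : T) = ((S : (S : c)) : c) = (c : c) = S`, and over a one-dimensional ring this forces `T = S`.
So `c` is invertible over the semilocal ring `S`, hence principal.
-/

section Dualizing

variable {R S : Type*} [CommRing R] [CommRing S] [Algebra R S]

/-- A functional `t` on an `R`-algebra `S` is dualizing if it freely generates the `S`-module
`Hom_R(S, R)`, that is, if every functional on `S` is `x ↦ t (s * x)` for a unique `s`. -/
def IsDualizing (t : Module.Dual R S) : Prop :=
  Function.Bijective ((LinearMap.mul R S).compr₂ t)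

namespace IsDualizing

variable {t : Module.Dual R S} (ht : IsDualizing t)

/-- The isomorphism `S ≃ Hom_R(S, R)` sending `s` to `x ↦ t (s * x)`. -/
noncomputable def equivDual : S ≃ₗ[R] Module.Dual R S :=
  LinearEquiv.ofBijective _ ht

@[simp]
theorem equivDual_apply_apply (s x : S) : ht.equivDual s x = t (s * x) := rfl

theorem apply_equivDual_symm_mul (f : Module.Dual R S) (x : S) :
    t (ht.equivDual.symm f * x) = f x := by
  rw [← equivDual_apply_apply ht, LinearEquiv.apply_symm_apply]

include ht in
theorem eq_of_forall_apply_mul {a b : S} (h : ∀ x, t (a * x) = t (b * x)) : a = b :=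
  ht.equivDual.injective (LinearMap.ext h)

variable (M : Type*) [AddCommGroup M] [Module R M] [Module S M] [IsScalarTower R S M]

/-- Composition with a dualizing functional `t` identifies `Hom_S(M, S)` with `Hom_R(M, R)`. -/
noncomputable def dualEquiv : Module.Dual S M ≃ₗ[R] Module.Dual R M where
  __ := LinearMap.compRight R t ∘ₗ LinearMap.restrictScalarsₗ R S M S R
  invFun f :=
    { toFun m := ht.equivDual.symm (f ∘ₗ (LinearMap.toSpanSingleton S M m).restrictScalars R)
      map_add' m n := ht.eq_of_forall_apply_mul fun x ↦ by
        simp [add_mul, apply_equivDual_symm_mul]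
      map_smul' s m := ht.eq_of_forall_apply_mul fun x ↦ by
        simp [mul_comm s, mul_assoc, mul_smul, apply_equivDual_symm_mul] }
  left_inv g := LinearMap.ext fun m ↦ ht.eq_of_forall_apply_mul fun x ↦
    (ht.apply_equivDual_symm_mul _ x).trans (by simp [mul_comm])
  right_inv f := LinearMap.ext fun m ↦ by
    simpa using ht.apply_equivDual_symm_mul
      (f ∘ₗ (LinearMap.toSpanSingleton S M m).restrictScalars R) 1

include ht in
theorem isReflexive_iff : Module.IsReflexive S M ↔ Module.IsReflexive R M := by
  have hsquare : (ht.dualEquiv M).dualMap ∘ Module.Dual.eval R M =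
      ht.dualEquiv (Module.Dual S M) ∘ Module.Dual.eval S M := rfl
  have hbij : Function.Bijective (Module.Dual.eval S M) ↔
      Function.Bijective (Module.Dual.eval R M) := by
    rw [← EquivLike.comp_bijective _ (ht.dualEquiv (Module.Dual S M)), ← hsquare,
      EquivLike.comp_bijective]
  exact ⟨fun h ↦ ⟨hbij.mp h.1⟩, fun h ↦ ⟨hbij.mpr h.1⟩⟩

end IsDualizing

end Dualizing

section FractionRing

variable {A Q : Type*} [CommRing A] [CommRing Q] [Algebra A Q] {I J : Submodule A Q} {u v : Qˣ}

theorem submodule_div_mul_eq_div_div (I J K : Submodule A Q) : I / (J * K) = I / J / K :=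
  eq_of_forall_le_iff fun L ↦ by
    simp only [Submodule.le_div_iff_mul_le, mul_assoc, mul_comm J]

variable [IsFractionRing A Q]

instance isTorsionFree_submodule (I : Submodule A Q) : Module.IsTorsionFree A I :=
  have := IsLocalization.flat Q (nonZeroDivisors A)
  inferInstance

theorem mul_linearMap_apply_comm (f : I →ₗ[A] Q) (x y : I) : (x : Q) * f y = y * f x := by
  obtain ⟨⟨a, s⟩, hx⟩ := IsLocalization.surj (nonZeroDivisors A) (x : Q)
  obtain ⟨⟨b, r⟩, hy⟩ := IsLocalization.surj (nonZeroDivisors A) (y : Q)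
  dsimp only at hx hy
  have hxy : (a * r : A) • y = (b * s : A) • x := Subtype.ext <| by
    simp only [Submodule.coe_smul, Algebra.smul_def, map_mul]
    linear_combination (-(y * algebraMap A Q r)) * hx + x * algebraMap A Q s * hy
  have hf := congrArg f hxy
  simp only [map_smul, Algebra.smul_def, map_mul, ← hx, ← hy] at hf
  refine ((IsLocalization.map_units Q s).mul (IsLocalization.map_units Q r)).mul_left_cancel ?_
  linear_combination hf

theorem coe_linearMap_apply_eq_mul (hu : ↑u ∈ I) (f : I →ₗ[A] J) (x : I) :
    (f x : Q) = ↑u⁻¹ * f ⟨u, hu⟩ * x := by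
  have h := mul_linearMap_apply_comm (J.subtype ∘ₗ f) ⟨u, hu⟩ x
  rw [mul_assoc, eq_comm, Units.inv_mul_eq_iff_eq_mul, mul_comm]
  exact h.symm

/-- The colon `J / I` of fractional ideals is `Hom_A(I, J)` when `I` is regular. Here and below,
regularity is the presence of a unit of the total ring of fractions. -/
noncomputable def divEquivHom (hu : ↑u ∈ I) (J : Submodule A Q) :
    ↥(J / I) ≃ₗ[A] (I →ₗ[A] J) where
  toFun x := (LinearMap.mulLeft A (x : Q)).restrict
    (Submodule.mem_div_iff_forall_mul_mem.mp x.2)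
  map_add' x y := LinearMap.ext fun z ↦ Subtype.ext (add_mul _ _ _)
  map_smul' a x := LinearMap.ext fun z ↦ Subtype.ext (smul_mul_assoc _ _ _)
  invFun f := ⟨(u⁻¹ : Qˣ) * f ⟨u, hu⟩, Submodule.mem_div_iff_forall_mul_mem.mpr fun y hy ↦ by
    rw [← coe_linearMap_apply_eq_mul hu f ⟨y, hy⟩]
    exact (f _).2⟩
  left_inv x := Subtype.ext ((Units.inv_mul_eq_iff_eq_mul u).mpr (mul_comm _ _))
  right_inv f := LinearMap.ext fun y ↦ Subtype.ext (coe_linearMap_apply_eq_mul hu f y).symm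

variable (A Q) in
/-- The total ring of fractions contains its base ring as the unit submodule. -/
noncomputable def equivOneSubmodule : A ≃ₗ[A] (1 : Submodule A Q) :=
  (LinearEquiv.ofInjective (Algebra.linearMap A Q) (IsFractionRing.injective A Q)).trans
    (LinearEquiv.ofEq _ _ Submodule.one_eq_range.symm)

/-- The inverse `1 / I` of a regular fractional ideal is its dual. -/
noncomputable def oneDivEquivDual (hu : ↑u ∈ I) : ↥(1 / I) ≃ₗ[A] Module.Dual A I :=
  (divEquivHom hu 1).trans (LinearEquiv.congrRight (equivOneSubmodule A Q).symm)

theorem algebraMap_oneDivEquivDual (hu : ↑u ∈ I) (x : ↥(1 / I)) (y : I) :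
    algebraMap A Q (oneDivEquivDual hu x y) = x * y := by
  change ((equivOneSubmodule A Q (oneDivEquivDual hu x y) : (1 : Submodule A Q)) : Q) = x * y
  exact congrArg Subtype.val ((equivOneSubmodule A Q).apply_symm_apply (divEquivHom hu 1 x y))

theorem one_div_one_div_eq_of_isReflexive [Module.IsReflexive A I] (hu : ↑u ∈ I) (hv : ↑v ∈ 1 / I) :
    1 / (1 / I) = I := by
  refine le_antisymm (fun z hz ↦ ?_) ?_
  · obtain ⟨m, hm⟩ := (Module.bijective_dual_eval A I).2
      (oneDivEquivDual hv ⟨z, hz⟩ ∘ₗ (oneDivEquivDual hu).symm.toLinearMap)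
    have hvm := congrArg (algebraMap A Q) (LinearMap.congr_fun hm (oneDivEquivDual hu ⟨v, hv⟩))
    simp only [Module.Dual.eval_apply, LinearMap.comp_apply, LinearEquiv.coe_coe,
      LinearEquiv.symm_apply_apply, algebraMap_oneDivEquivDual] at hvm
    rw [mul_comm, v.mul_left_inj] at hvm
    exact hvm ▸ m.2
  · rw [Submodule.le_div_iff_mul_le]
    exact Submodule.mul_one_div_le_one

open scoped Pointwise in
theorem nonempty_linearEquiv_iff_exists_smul_eq (hu : ↑u ∈ I) (hv : ↑v ∈ J) :
    Nonempty (I ≃ₗ[A] J) ↔ ∃ a : Qˣ, a • I = J := by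
  constructor
  · rintro ⟨e⟩
    have he := coe_linearMap_apply_eq_mul hu e.toLinearMap
    simp only [LinearEquiv.coe_coe] at he
    have hunit : IsUnit (↑u⁻¹ * e ⟨u, hu⟩ : Q) := by
      refine isUnit_of_mul_isUnit_left (y := ↑(e.symm ⟨v, hv⟩)) ?_
      rw [← he, e.apply_symm_apply]
      exact v.isUnit
    obtain ⟨a, ha⟩ := hunit
    refine ⟨a, ?_⟩
    ext y
    rw [Units.smul_def, Submodule.mem_smul_pointwise_iff_exists, ha]
    constructor
    · rintro ⟨x, hx, rfl⟩
      rw [smul_eq_mul, ← he ⟨x, hx⟩]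
      exact (e _).2
    · intro hy
      refine ⟨e.symm ⟨y, hy⟩, (e.symm _).2, ?_⟩
      rw [smul_eq_mul, ← he, e.apply_symm_apply]
  · rintro ⟨a, rfl⟩
    exact ⟨(DistribMulAction.toLinearEquiv A Q a).submoduleMap I⟩

end FractionRing

section DimensionOne

variable {A : Type*} [CommRing A] [Ring.KrullDimLE 1 A]

theorem isMaximal_of_mem_nonZeroDivisors {d : A} (hd : d ∈ nonZeroDivisors A) {p : Ideal A}
    [hp : p.IsPrime] (hdp : d ∈ p) : p.IsMaximal :=
  (Ring.krullDimLE_one_iff.mp ‹_› p hp).resolve_left fun h ↦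
    notMem_nonZeroDivisors_of_mem_mem_minimalPrimes hdp h hd

variable [IsNoetherianRing A]

theorem exists_notMem_span_singleton_forall_mul_mem {d : A} (hd : d ∈ nonZeroDivisors A)
    {n : Ideal A} [n.IsMaximal] (hdn : d ∈ n) :
    ∃ s ∉ Ideal.span {d}, ∀ y ∈ n, y * s ∈ Ideal.span {d} := by
  have hmin : n ∈ (Module.annihilator A (A ⧸ Ideal.span {d})).minimalPrimes := by
    rw [Ideal.annihilator_quotient]
    refine ⟨⟨inferInstance, (Ideal.span_singleton_le_iff_mem n).mpr hdn⟩, fun q hq hqn ↦ ?_⟩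
    have := hq.1
    have hq_max := isMaximal_of_mem_nonZeroDivisors hd (hq.2 (Ideal.mem_span_singleton_self d))
    exact (hq_max.eq_of_le Ideal.IsPrime.ne_top' hqn).ge
  have hass := Module.associatedPrimes.minimalPrimes_annihilator_subset_associatedPrimes A _ hmin
  rw [AssociatedPrimes.mem_iff, isAssociatedPrime_iff] at hass
  obtain ⟨-, x, hx⟩ := hass
  obtain ⟨s, rfl⟩ := Ideal.Quotient.mk_surjective x
  have hmem (y : A) : y ∈ n ↔ y * s ∈ Ideal.span {d} := by
    rw [hx, Submodule.mem_colon_singleton, Submodule.mem_bot, ← Ideal.Quotient.eq_zero_iff_mem]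
    rfl
  refine ⟨s, fun hs ↦ n.one_notMem ((hmem 1).mpr ?_), fun y ↦ (hmem y).mp⟩
  rwa [one_mul]

variable {Q : Type*} [CommRing Q] [Algebra A Q] [IsFractionRing A Q] {I T : Submodule A Q}
  {u v : Qˣ}

theorem eq_one_of_one_div_le_one (hT : T ≤ 1) (hdiv : 1 / T ≤ 1) (hu : ↑u ∈ T) : T = 1 := by
  -- If `T` were proper, the socle of `A ⧸ (u)` would provide `s ∉ (u)` with `s / u ∈ 1 / T`.
  refine hT.antisymm (by_contra fun hlt ↦ ?_)
  let J : Ideal A := T.comap (Algebra.linearMap A Q)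
  have hJ : J ≠ ⊤ := fun h ↦ hlt <| Submodule.one_le.mpr <| by
    simpa [J] using (Ideal.eq_top_iff_one J).mp h
  obtain ⟨n, _, hJn⟩ := Ideal.exists_le_maximal J hJ
  obtain ⟨d, hd⟩ := Submodule.mem_one.mp (hT hu)
  have hinj := IsFractionRing.injective A Q
  have hd_reg : d ∈ nonZeroDivisors A :=
    mem_nonZeroDivisors_of_injective hinj (hd ▸ u.isUnit.mem_nonZeroDivisors)
  have hdJ : algebraMap A Q d ∈ T := hd ▸ hu
  obtain ⟨s, hs, hns⟩ := exists_notMem_span_singleton_forall_mul_mem hd_reg (hJn hdJ)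
  have hsT : ↑u⁻¹ * algebraMap A Q s ∈ 1 / T := by
    rw [Submodule.mem_div_iff_forall_mul_mem]
    intro t ht
    obtain ⟨t, rfl⟩ := Submodule.mem_one.mp (hT ht)
    obtain ⟨c, hc⟩ := Ideal.mem_span_singleton.mp (hns t (hJn ht))
    refine Submodule.mem_one.mpr ⟨c, ?_⟩
    rw [mul_assoc, eq_comm, Units.inv_mul_eq_iff_eq_mul, ← hd, ← map_mul, ← map_mul, ← hc,
      mul_comm]
  obtain ⟨c, hc⟩ := Submodule.mem_one.mp (hdiv hsT)
  refine hs (Ideal.mem_span_singleton.mpr ⟨c, hinj ?_⟩)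
  rw [map_mul, hc, hd, Units.mul_inv_cancel_left]

theorem mul_one_div_eq_one_of_div_self_eq_one (hu : ↑u ∈ I) (hv : ↑v ∈ 1 / I)
    (hrefl : 1 / (1 / I) = I) (hself : I / I = 1) : I * (1 / I) = 1 := by
  refine eq_one_of_one_div_le_one (u := u * v) Submodule.mul_one_div_le_one ?_ ?_
  · rw [mul_comm, submodule_div_mul_eq_div_div, hrefl, hself]
  · rw [Units.val_mul]
    exact Submodule.mul_mem_mul hu hv

end DimensionOne

section Semilocal

theorem exists_eq_span_singleton_of_mul_eq_one {A Q : Type*} [CommRing A]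
    [Finite (MaximalSpectrum A)] [CommRing Q] [Algebra A Q] [FaithfulSMul A Q]
    {I J : Submodule A Q} (hIJ : I * J = 1) : ∃ a : Qˣ, I = Submodule.span A {(a : Q)} := by
  let U : (Submodule A Q)ˣ := ⟨I, J, hIJ, mul_comm I J ▸ hIJ⟩
  have hU : U ∈ (Submodule.unitsToPic A Q).ker := Subsingleton.elim _ _
  rw [Submodule.ker_unitsToPic] at hU
  obtain ⟨a, ha⟩ := hU
  exact ⟨a, congrArg Units.val ha.symm⟩

end Semilocal

section IntegralExtension

variable (R S : Type*) [CommRing R] [CommRing S] [Algebra R S]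

theorem krullDimLE_of_isIntegral [Algebra.IsIntegral R S] (n : ℕ) [Ring.KrullDimLE n R] :
    Ring.KrullDimLE n S := by
  rw [Ring.krullDimLE_iff]
  exact (Order.krullDim_le_of_strictMono (PrimeSpectrum.comap (algebraMap R S))
    fun _ _ h ↦ Ideal.IsIntegral.comap_lt_comap h).trans (Ring.krullDimLE_iff.mp ‹_›)

theorem finite_maximalSpectrum_of_finite [Module.Finite R S] [Finite (MaximalSpectrum R)] :
    Finite (MaximalSpectrum S) := by
  have hfin : (⋃ m : MaximalSpectrum R, m.asIdeal.primesOver S).Finite :=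
    Set.finite_iUnion fun m ↦ Algebra.QuasiFinite.finite_primesOver m.asIdeal
  have : Finite {n : Ideal S // n.IsMaximal} := (hfin.subset fun n (hn : n.IsMaximal) ↦
    Set.mem_iUnion.mpr ⟨⟨n.comap (algebraMap R S),
      Ideal.isMaximal_comap_of_isIntegral_of_isMaximal n⟩, hn.isPrime, ⟨rfl⟩⟩).to_subtype
  exact Finite.of_equiv _ (MaximalSpectrum.equivSubtype S).symm

end IntegralExtension

section TorsionFree

variable (A M : Type*) [CommRing A] [AddCommGroup M] [Module A M]

theorem isTorsionFreeModule_of_isTorsionFree [Module.IsTorsionFree A M] :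
    IsTorsionFreeModule A M := fun _ ha _ h ↦
  (isRegular_iff_mem_nonZeroDivisors.mpr ha).isSMulRegular.right_eq_zero_of_smul h

end TorsionFree

section Birational

open scoped Pointwise

variable {R Q : Type*} [CommRing R] [CommRing Q] [Algebra R Q] (S : Subalgebra R Q)

theorem toSubmodule_div_self : S.toSubmodule / S.toSubmodule = S.toSubmodule := by
  refine le_antisymm (fun x hx ↦ ?_) ?_
  · simpa using Submodule.mem_div_iff_forall_mul_mem.mp hx 1 S.one_mem
  · rw [Submodule.le_div_iff_mul_le]
    exact S.isIdempotentElem_toSubmodule.le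

/-- The conductor `(R : S)`, as a module over `S`. -/
def conductorSubmodule : Submodule S Q where
  __ := ((1 : Submodule R Q) / S.toSubmodule).toAddSubmonoid
  smul_mem' s x hx := Submodule.mem_div_iff_forall_mul_mem.mpr fun y hy ↦ by
    rw [Subalgebra.smul_def, smul_eq_mul, mul_comm _ x, mul_assoc]
    exact Submodule.mem_div_iff_forall_mul_mem.mp hx _ (S.mul_mem s.2 hy)

theorem conductorSubmodule_le_one : conductorSubmodule S ≤ 1 := fun x hx ↦ by
  obtain ⟨r, hr⟩ := Submodule.mem_one.mp
    (Submodule.mem_div_iff_forall_mul_mem.mp hx 1 S.one_mem)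
  exact Submodule.mem_one.mpr ⟨algebraMap R S r, hr.trans (mul_one x)⟩

variable [IsFractionRing R Q]

instance isFractionRing_subalgebra : IsFractionRing S Q where
  map_units s := by
    have hs : (s : Q) ∈ nonZeroDivisors Q := by
      rw [mem_nonZeroDivisors_iff_right]
      intro z hz
      obtain ⟨⟨r, d⟩, hr⟩ := IsLocalization.surj (nonZeroDivisors R) z
      have hrs : algebraMap R S r * s = 0 := Subtype.ext <| by
        change algebraMap R Q r * (s : Q) = 0
        rw [← hr, mul_right_comm, hz, zero_mul]
      have hr0 : algebraMap R Q r = 0 :=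
        congrArg Subtype.val (mem_nonZeroDivisors_iff_right.mp s.2 _ hrs)
      exact (IsLocalization.map_units Q d).mul_left_eq_zero.mp (hr.trans hr0)
    rwa [IsFractionRing.nonZeroDivisors_eq_isUnit R Q] at hs
  surj z := by
    obtain ⟨⟨r, d⟩, hr⟩ := IsLocalization.surj (nonZeroDivisors R) z
    have hd : algebraMap R S d ∈ nonZeroDivisors S :=
      mem_nonZeroDivisors_of_injective (f := algebraMap S Q) Subtype.val_injective
        (IsLocalization.map_units Q d).mem_nonZeroDivisors
    exact ⟨⟨algebraMap R S r, ⟨_, hd⟩⟩, hr⟩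
  exists_of_eq h := ⟨1, by rw [Subtype.ext h]⟩

/-- Multiplication identifies the conductor of `S` with `Hom_R(S, R)`. -/
noncomputable def conductorEquivDual : conductorSubmodule S ≃ₗ[R] Module.Dual R S :=
  oneDivEquivDual (u := 1) S.one_mem

theorem algebraMap_conductorEquivDual (x : conductorSubmodule S) (s : S) :
    algebraMap R Q (conductorEquivDual S x s) = x * s :=
  algebraMap_oneDivEquivDual (u := 1) S.one_mem x s

variable {S} in
theorem exists_isDualizing_of_smul_eq_conductor {a : Qˣ}
    (ha : a • S.toSubmodule = 1 / S.toSubmodule) : ∃ t : Module.Dual R S, IsDualizing t := by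
  have hmem (x : Q) : x ∈ conductorSubmodule S ↔ ∃ s ∈ S, a * s = x := by
    change x ∈ 1 / S.toSubmodule ↔ _
    rw [← ha, Units.smul_def, Submodule.mem_smul_pointwise_iff_exists]
    rfl
  refine ⟨conductorEquivDual S ⟨a, (hmem a).mpr ⟨1, S.one_mem, mul_one _⟩⟩,
    fun s s' h ↦ ?_, fun f ↦ ?_⟩
  · have h1 := congrArg (algebraMap R Q) (LinearMap.congr_fun h 1)
    simpa [algebraMap_conductorEquivDual] using h1
  · obtain ⟨⟨x, hx⟩, rfl⟩ := (conductorEquivDual S).surjective f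
    obtain ⟨s, hs, rfl⟩ := (hmem x).mp hx
    refine ⟨⟨s, hs⟩, LinearMap.ext fun y ↦ IsFractionRing.injective R Q ?_⟩
    simp [algebraMap_conductorEquivDual, mul_assoc]

variable [Module.Finite R S]

instance finite_conductorSubmodule [IsNoetherianRing R] : Module.Finite S (conductorSubmodule S) :=
  have : IsNoetherian R S := isNoetherian_of_isNoetherianRing_of_finite R S
  have : Module.Finite R (conductorSubmodule S) := .equiv (conductorEquivDual S).symm
  .of_restrictScalars_finite R S _

theorem exists_unit_mem_conductor : ∃ u : Qˣ, (u : Q) ∈ 1 / S.toSubmodule := by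
  have hfg : S.toSubmodule.FG := Module.Finite.iff_fg.mp ‹_›
  obtain ⟨d, hd, h⟩ := FractionalIdeal.isFractional_of_fg (S := nonZeroDivisors R) hfg
  refine ⟨(IsLocalization.map_units Q ⟨d, hd⟩).unit, ?_⟩
  refine Submodule.mem_div_iff_forall_mul_mem.mpr fun y hy ↦ ?_
  obtain ⟨r, hr⟩ := h y hy
  exact Submodule.mem_one.mpr ⟨r, hr.trans (Algebra.smul_def d y)⟩

section Reflexive

variable [Module.IsReflexive R S]

theorem one_div_one_div_toSubmodule : 1 / (1 / S.toSubmodule) = S.toSubmodule := by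
  have : Module.IsReflexive R S.toSubmodule := ‹Module.IsReflexive R S›
  obtain ⟨u, hu⟩ := exists_unit_mem_conductor S
  exact one_div_one_div_eq_of_isReflexive (u := 1) S.one_mem hu

theorem conductor_div_self :
    1 / S.toSubmodule / (1 / S.toSubmodule) = S.toSubmodule := by
  rw [← submodule_div_mul_eq_div_div, mul_comm, submodule_div_mul_eq_div_div,
    one_div_one_div_toSubmodule, toSubmodule_div_self]

theorem conductorSubmodule_div_self : conductorSubmodule S / conductorSubmodule S = 1 := by
  ext x
  have hx : x ∈ conductorSubmodule S / conductorSubmodule S ↔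
      x ∈ 1 / S.toSubmodule / (1 / S.toSubmodule) := Iff.rfl
  rw [hx, conductor_div_self, Submodule.mem_one]
  exact ⟨fun h ↦ ⟨⟨x, h⟩, rfl⟩, fun ⟨s, hs⟩ ↦ hs ▸ s.2⟩

theorem nonempty_conductor_linearEquiv_end_iff :
    Nonempty (↥(1 / S.toSubmodule) ≃ₗ[R] (↥(1 / S.toSubmodule) →ₗ[R] ↥(1 / S.toSubmodule))) ↔
      ∃ a : Qˣ, a • S.toSubmodule = 1 / S.toSubmodule := by
  obtain ⟨u, hu⟩ := exists_unit_mem_conductor S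
  let endEquiv := (LinearEquiv.ofEq _ _ (conductor_div_self S)).symm.trans
    (divEquivHom hu (1 / S.toSubmodule))
  rw [← nonempty_linearEquiv_iff_exists_smul_eq (u := 1) S.one_mem hu]
  exact ⟨fun ⟨e⟩ ↦ ⟨endEquiv.trans e.symm⟩, fun ⟨e⟩ ↦ ⟨e.symm.trans endEquiv⟩⟩

theorem exists_smul_eq_conductor [IsNoetherianRing R] [Ring.KrullDimLE 1 R]
    [Finite (MaximalSpectrum R)] [Module.IsReflexive S (conductorSubmodule S)] :
    ∃ a : Qˣ, a • S.toSubmodule = 1 / S.toSubmodule := by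
  have := IsNoetherianRing.of_finite R S
  have := krullDimLE_of_isIntegral R S 1
  have := finite_maximalSpectrum_of_finite R S
  obtain ⟨u, hu⟩ := exists_unit_mem_conductor S
  replace hu : ↑u ∈ conductorSubmodule S := hu
  have hone : ((1 : Qˣ) : Q) ∈ 1 / conductorSubmodule S :=
    Submodule.one_mem_div.mpr (conductorSubmodule_le_one S)
  have hinv : conductorSubmodule S * (1 / conductorSubmodule S) = 1 :=
    mul_one_div_eq_one_of_div_self_eq_one hu hone
      (one_div_one_div_eq_of_isReflexive hu hone) (conductorSubmodule_div_self S)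
  obtain ⟨a, ha⟩ := exists_eq_span_singleton_of_mul_eq_one hinv
  refine ⟨a, Submodule.ext fun x ↦ ?_⟩
  have hx : x ∈ 1 / S.toSubmodule ↔ x ∈ conductorSubmodule S := Iff.rfl
  rw [hx, ha, Submodule.mem_span_singleton, Units.smul_def,
    Submodule.mem_smul_pointwise_iff_exists]
  exact ⟨fun ⟨s, hs, h⟩ ↦ ⟨⟨s, hs⟩, (mul_comm _ _).trans h⟩,
    fun ⟨s, h⟩ ↦ ⟨s, s.2, (mul_comm _ _).trans h⟩⟩

end Reflexive

end Birational

universe v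

theorem reflexive_and_conductor_stable_iff_refl_eq_general {R : Type u} {Q : Type v} [CommRing R]
    [IsNoetherianRing R] [Finite (MaximalSpectrum R)] [CommRing Q] [Algebra R Q]
    [IsFractionRing R Q] (hdim : ringKrullDim R ≤ 1) (S : Subalgebra R Q) [Module.Finite R S] :
    (Module.IsReflexive R S ∧ Nonempty (↥(1 / S.toSubmodule) ≃ₗ[R]
        (↥(1 / S.toSubmodule) →ₗ[R] ↥(1 / S.toSubmodule)))) ↔
      ∀ (M : Type v) [AddCommGroup M] [Module R M] [Module S M] [IsScalarTower R S M],
        Module.Finite S M →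
          (Module.IsReflexive S M ↔ (IsTorsionFreeModule S M ∧ Module.IsReflexive R M)) := by
  constructor
  · rintro ⟨_, hstable⟩ M _ _ _ _ _
    obtain ⟨a, ha⟩ := (nonempty_conductor_linearEquiv_end_iff S).mp hstable
    obtain ⟨t, ht⟩ := exists_isDualizing_of_smul_eq_conductor ha
    rw [← ht.isReflexive_iff, iff_and_self]
    exact fun _ ↦ isTorsionFreeModule_of_isTorsionFree S M
  · intro h
    have hS : Module.IsReflexive R S := ((h S inferInstance).mp inferInstance).2
    have : Ring.KrullDimLE 1 R := Ring.krullDimLE_iff.mpr hdim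
    have hcR : Module.IsReflexive R (conductorSubmodule S) :=
      Module.equiv (conductorEquivDual S).symm
    have hcS : Module.IsReflexive S (conductorSubmodule S) :=
      (h _ inferInstance).mpr ⟨isTorsionFreeModule_of_isTorsionFree S _, hcR⟩
    exact ⟨hS, (nonempty_conductor_linearEquiv_end_iff S).mpr (exists_smul_eq_conductor S)⟩

/-- `S` is a reflexive `R`-module with stable conductor iff
`refl(S) = CM(S) ∩ refl(R)`, i.e. a finitely generated `S`-module is reflexive over `S`
exactly when it is torsion-free over `S` and reflexive over `R`. -/
theorem reflexive_and_conductor_stable_iff_refl_eq (R : Type u) [CommRing R]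
    (hCM : IsCohenMacaulayLocalRing R) (hdim : ringKrullDim R = 1)
    (hGG : IsGenericallyGorenstein R)
    (S : Subalgebra R (FractionRing R)) (hfin : Module.Finite R S) :
    (Module.IsReflexive R S ∧
      Nonempty ((↥(conductorFrac R S)) ≃ₗ[R]
        ((↥(conductorFrac R S)) →ₗ[R] (↥(conductorFrac R S))))) ↔
      ∀ (M : Type u) [AddCommGroup M] [Module R M] [Module S M] [IsScalarTower R S M],
        Module.Finite S M →
          (Module.IsReflexive S M ↔ (IsTorsionFreeModule S M ∧ Module.IsReflexive R M)) := by
  obtain ⟨_, _, -⟩ := hCM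
  exact reflexive_and_conductor_stable_iff_refl_eq_general hdim.le S
end

section
/- Let R be a Gorenstein local Noetherian ring of dimension 1 and let R ⊆ S ⊆ Q(R) be a module finite birational extension. Then the following are equivalent: (i) S is a Gorenstein ring; (ii) S ≅ Hom_R(S, R) as R-modules; (iii) the conductor c_R(S) = (R : S) is a stable ideal. -/
set_option maxHeartbeats 1000000
set_option synthInstance.maxHeartbeats 400000

open CategoryTheory

universe u

/-!
Write `C = (R : S)` for the conductor. A Noetherian ring of dimension at most one is Gorenstein if
and only if it has injective dimension at most one over itself: locally, the injective dimension is
bounded by the projective dimension of any module having the maximal ideal as an associated prime,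
and either the ring itself or its quotient by a nonzerodivisor is such a module.
It follows that its regular fractional ideals are reflexive.

Multiplication in `Q(R)` identifies `C` with `Hom_R(S, R)` and `Hom_R(C, C)` with
`(C : C) = (R : (R : S)) = S`, so (ii) and (iii) both say that `S ≅ C`. If `S ≅ Hom_R(S, R)`, then
by adjunction `S` inherits injective dimension at most one from `R`. Conversely, if `S` is
Gorenstein, then reflexivity over `S` and `(C : C) = S` show that `C` is an invertible fractional
ideal of `S`, which is free because `S` is semilocal.
-/

section ExtComparison

variable {A : Type u} [CommRing A] {X : ModuleCat.{u} A} (P : ProjectiveResolution X)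
  (Y : ModuleCat.{u} A) (n : ℕ)

theorem subsingleton_ext_succ_iff_of_projectiveResolution :
    Subsingleton (Abelian.Ext X Y (n + 1)) ↔
      ∀ f : P.complex.X (n + 1) ⟶ Y, P.complex.d (n + 2) (n + 1) ≫ f = 0 →
        ∃ g : P.complex.X n ⟶ Y, P.complex.d (n + 1) n ≫ g = f := by
  refine ⟨fun h f hf ↦ ?_, fun h ↦ subsingleton_of_forall_eq 0 fun α ↦ ?_⟩
  · exact (P.extMk_eq_zero_iff f (n + 2) rfl hf n rfl).1 (Subsingleton.elim _ _)
  · obtain ⟨f, hf, rfl⟩ := P.extMk_surjective α (n + 2) rfl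
    exact (P.extMk_eq_zero_iff f (n + 2) rfl hf n rfl).2 (h f hf)

theorem subsingleton_leftDerived_ext_succ_iff_of_projectiveResolution :
    Subsingleton (((Ext A (ModuleCat.{u} A) (n + 1)).obj (Opposite.op X)).obj Y) ↔
      ∀ f : P.complex.X (n + 1) ⟶ Y, P.complex.d (n + 2) (n + 1) ≫ f = 0 →
        ∃ g : P.complex.X n ⟶ Y, P.complex.d (n + 1) n ≫ g = f := by
  rw [← ModuleCat.isZero_iff_subsingleton, (P.isoExt (R := A) (n + 1) Y).isZero_iff,
    ← HomologicalComplex.exactAt_iff_isZero_homology,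
    HomologicalComplex.exactAt_iff' _ n (n + 1) (n + 2) (by simp) (by simp),
    ShortComplex.moduleCat_exact_iff]
  rfl

variable (X) in
theorem subsingleton_extModule_succ_iff :
    Subsingleton (ExtModule A X Y (n + 1)) ↔ Subsingleton (Abelian.Ext X Y (n + 1)) :=
  let P := ProjectiveResolution.of X
  (subsingleton_leftDerived_ext_succ_iff_of_projectiveResolution P Y n).trans
    (subsingleton_ext_succ_iff_of_projectiveResolution P Y n).symm

end ExtComparison

section LongExactSequence

variable {C : Type*} [Category C] [Abelian C] [HasExt.{u} C] {S : ShortComplex C} {X Y : C}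

theorem subsingleton_ext_of_iso (e : X ≅ Y) (Z : C) (j : ℕ)
    (h : Subsingleton (Abelian.Ext Y Z j)) : Subsingleton (Abelian.Ext X Z j) := by
  refine subsingleton_of_forall_eq 0 fun α ↦ ?_
  rw [← Abelian.Ext.mk₀_id_comp α, ← e.hom_inv_id, ← Abelian.Ext.mk₀_comp_mk₀_assoc,
    Subsingleton.elim ((Abelian.Ext.mk₀ e.inv).comp α (zero_add j)) 0, Abelian.Ext.comp_zero]

theorem subsingleton_ext_X₁ (hS : S.ShortExact) (j : ℕ)
    (h₂ : Subsingleton (Abelian.Ext S.X₂ Y j)) (h₃ : Subsingleton (Abelian.Ext S.X₃ Y (j + 1))) :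
    Subsingleton (Abelian.Ext S.X₁ Y j) := by
  refine subsingleton_of_forall_eq 0 fun α ↦ ?_
  obtain ⟨β, rfl⟩ := Abelian.Ext.contravariant_sequence_exact₁ hS Y α (add_comm 1 j)
    (Subsingleton.elim _ _)
  rw [Subsingleton.elim β 0, Abelian.Ext.comp_zero]

theorem subsingleton_ext_X₂ (hS : S.ShortExact) (j : ℕ)
    (h₁ : Subsingleton (Abelian.Ext S.X₁ Y j)) (h₃ : Subsingleton (Abelian.Ext S.X₃ Y j)) :
    Subsingleton (Abelian.Ext S.X₂ Y j) := by
  refine subsingleton_of_forall_eq 0 fun α ↦ ?_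
  obtain ⟨β, rfl⟩ := Abelian.Ext.contravariant_sequence_exact₂ hS Y α (Subsingleton.elim _ _)
  rw [Subsingleton.elim β 0, Abelian.Ext.comp_zero]

theorem subsingleton_ext_X₃ (hS : S.ShortExact) (j : ℕ)
    (h₁ : Subsingleton (Abelian.Ext S.X₁ Y j)) (h₂ : Subsingleton (Abelian.Ext S.X₂ Y (j + 1))) :
    Subsingleton (Abelian.Ext S.X₃ Y (j + 1)) := by
  refine subsingleton_of_forall_eq 0 fun α ↦ ?_
  obtain ⟨β, rfl⟩ := Abelian.Ext.contravariant_sequence_exact₃ hS Y α (Subsingleton.elim _ _)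
    (add_comm 1 j)
  rw [Subsingleton.elim β 0, Abelian.Ext.comp_zero]

theorem subsingleton_ext_X₃_of_injective_X₂ (hS : S.ShortExact) [Injective S.X₂] (j : ℕ)
    (h₁ : Subsingleton (Abelian.Ext Y S.X₁ (j + 2))) :
    Subsingleton (Abelian.Ext Y S.X₃ (j + 1)) := by
  refine subsingleton_of_forall_eq 0 fun α ↦ ?_
  obtain ⟨β, rfl⟩ := Abelian.Ext.covariant_sequence_exact₃ Y hS α rfl (Subsingleton.elim _ _)
  rw [Abelian.Ext.eq_zero_of_injective β, Abelian.Ext.zero_comp]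

theorem exists_comp_eq_of_subsingleton_ext_one (hS : S.ShortExact)
    (h : Subsingleton (Abelian.Ext S.X₃ Y 1)) (φ : S.X₁ ⟶ Y) : ∃ ψ : S.X₂ ⟶ Y, S.f ≫ ψ = φ := by
  obtain ⟨β, hβ⟩ := Abelian.Ext.contravariant_sequence_exact₁ hS Y (Abelian.Ext.mk₀ φ)
    (add_zero 1) (Subsingleton.elim _ _)
  obtain ⟨ψ, rfl⟩ := (Abelian.Ext.mk₀_bijective _ _).surjective β
  exact ⟨ψ, (Abelian.Ext.mk₀_bijective _ _).injective (by rwa [← Abelian.Ext.mk₀_comp_mk₀])⟩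

theorem subsingleton_ext_one_of_forall_exists_comp_eq (hS : S.ShortExact) [Projective S.X₂]
    (h : ∀ φ : S.X₁ ⟶ Y, ∃ ψ : S.X₂ ⟶ Y, S.f ≫ ψ = φ) :
    Subsingleton (Abelian.Ext S.X₃ Y 1) := by
  refine subsingleton_of_forall_eq 0 fun α ↦ ?_
  obtain ⟨β, rfl⟩ := Abelian.Ext.contravariant_sequence_exact₃ hS Y α
    (Abelian.Ext.eq_zero_of_projective (n := 0) _) (add_zero 1)
  obtain ⟨φ, rfl⟩ := (Abelian.Ext.mk₀_bijective _ _).surjective β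
  obtain ⟨ψ, rfl⟩ := h φ
  rw [← Abelian.Ext.mk₀_comp_mk₀]
  exact hS.extClass_comp_assoc _

end LongExactSequence

section Baer

variable {A : Type u} [CommRing A]

theorem shortExact_subtype_mkQ {M : Type u} [AddCommGroup M] [Module A M] (K : Submodule A M) :
    (ModuleCat.shortComplexOfCompEqZero K.subtype K.mkQ
      (LinearMap.exact_subtype_mkQ K).linearMap_comp_eq_zero).ShortExact :=
  ModuleCat.shortComplex_shortExact _ (LinearMap.exact_subtype_mkQ K) K.subtype_injective
    K.mkQ_surjective

theorem shortExact_mkQ_range {M P : Type u} [AddCommGroup M] [Module A M] [AddCommGroup P]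
    [Module A P] {f : M →ₗ[A] P} (hf : Function.Injective f) :
    (ModuleCat.shortComplexOfCompEqZero f f.range.mkQ
      f.exact_map_mkQ_range.linearMap_comp_eq_zero).ShortExact :=
  ModuleCat.shortComplex_shortExact _ f.exact_map_mkQ_range hf (Submodule.mkQ_surjective _)

theorem subsingleton_ext_of_injective {M P : Type u} [AddCommGroup M] [Module A M]
    [AddCommGroup P] [Module A P] {f : M →ₗ[A] P} (hf : Function.Injective f)
    {N : ModuleCat.{u} A} (j : ℕ) (hP : HasProjectiveDimensionLT (ModuleCat.of A P) j)
    (hN : HasInjectiveDimensionLE N j) : Subsingleton (Abelian.Ext (ModuleCat.of A M) N j) :=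
  subsingleton_ext_X₁ (shortExact_mkQ_range hf) j (hP.subsingleton _ _ _ le_rfl _)
    (hN.subsingleton _ _ _ le_rfl _)

theorem baer_of_subsingleton_ext {N : ModuleCat.{u} A}
    (h : ∀ I : Ideal A, Subsingleton (Abelian.Ext (ModuleCat.of A (A ⧸ I)) N 1)) :
    Module.Baer A N := fun I φ ↦ by
  obtain ⟨ψ, hψ⟩ := exists_comp_eq_of_subsingleton_ext_one (shortExact_subtype_mkQ I) (h I)
    (ModuleCat.ofHom φ)
  exact ⟨ψ.hom, fun x hx ↦ ConcreteCategory.congr_hom hψ ⟨x, hx⟩⟩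

theorem hasInjectiveDimensionLE_of_forall_ideal (n : ℕ) (N : ModuleCat.{u} A)
    (h : ∀ I : Ideal A, Subsingleton (Abelian.Ext (ModuleCat.of A (A ⧸ I)) N (n + 1))) :
    HasInjectiveDimensionLE N n := by
  induction n generalizing N with
  | zero =>
    exact injective_iff_hasInjectiveDimensionLT_one.1 <|
      (Module.injective_iff_injective_object A N).1 (baer_of_subsingleton_ext h).injective
  | succ n ih =>
    obtain ⟨I, _, f, _⟩ := EnoughInjectives.presentation N
    have hS := shortExact_mkQ_range ((ModuleCat.mono_iff_injective f).1 ‹_›)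
    exact (hS.hasInjectiveDimensionLT_X₃_iff n inferInstance).1 <| ih _ fun I ↦
      subsingleton_ext_X₃_of_injective_X₂ hS n (h I)

theorem isGorensteinLocalRing_iff :
    IsGorensteinLocalRing A ↔ IsLocalRing A ∧ IsNoetherianRing A ∧
      ∃ n, HasInjectiveDimensionLE (ModuleCat.of A A) n := by
  refine and_congr_right' <| and_congr_right' <| exists_congr fun n ↦ ?_
  simp only [subsingleton_extModule_succ_iff (ModuleCat.of A _) (ModuleCat.of A A)]
  exact ⟨hasInjectiveDimensionLE_of_forall_ideal n (ModuleCat.of A A), fun h I ↦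
    h.subsingleton _ _ _ le_rfl _⟩

end Baer

section DepthDescent

variable {A : Type u} [CommRing A] [IsNoetherianRing A] {M N : ModuleCat.{u} A}

theorem subsingleton_ext_of_smulShortComplex [Module.Finite A M] [Module.Finite A N] {y : A}
    (hy : y ∈ Ring.jacobson A) (hreg : IsSMulRegular M y) (j : ℕ)
    (h : Subsingleton (Abelian.Ext (M.smulShortComplex y).X₃ N (j + 1))) :
    Subsingleton (Abelian.Ext M N j) := by
  have hle : (⊤ : Submodule A (Abelian.Ext M N j)) ≤ Ideal.span {y} • ⊤ := fun α _ ↦ by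
    obtain ⟨β : Abelian.Ext M N j, rfl⟩ := Abelian.Ext.contravariant_sequence_exact₁
      hreg.smulShortComplex_shortExact N α (add_comm 1 j) (Subsingleton.elim _ _)
    change (Abelian.Ext.mk₀ (y • 𝟙 M)).comp β (zero_add j) ∈ _
    rw [Abelian.Ext.mk₀_smul, Abelian.Ext.smul_comp, Abelian.Ext.mk₀_id_comp]
    exact Submodule.smul_mem_smul (Ideal.mem_span_singleton_self y) trivial
  have hbot := Submodule.eq_bot_of_le_smul_of_le_jacobson_bot (Ideal.span {y}) ⊤
    Module.Finite.fg_top hle <| (Ideal.span_singleton_le_iff_mem _).2 <| by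
      simpa [Ring.jacobson_eq_sInf_isMaximal, Ideal.jacobson] using hy
  exact (Submodule.subsingleton_iff A).1 (subsingleton_of_bot_eq_top hbot.symm)

variable [IsLocalRing A]

theorem hasInjectiveDimensionLE_of_succ [Module.Finite A N] (j : ℕ)
    (hN : HasInjectiveDimensionLE N (j + 1)) (hk : Subsingleton
      (Abelian.Ext (ModuleCat.of A (A ⧸ IsLocalRing.maximalIdeal A)) N (j + 1))) :
    HasInjectiveDimensionLE N j := by
  suffices h : ∀ (M : Type u) [AddCommGroup M] [Module A M] [Module.Finite A M],
      Subsingleton (Abelian.Ext (ModuleCat.of A M) N (j + 1)) from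
    hasInjectiveDimensionLE_of_forall_ideal j N fun I ↦ h (A ⧸ I)
  intro M _ _ hM
  induction hM using IsNoetherianRing.induction_on_isQuotientEquivQuotientPrime A with
  | subsingleton M =>
    exact ((ModuleCat.isZero_of_subsingleton
      (ModuleCat.of A M)).hasProjectiveDimensionLT_zero).subsingleton _ _ _ (Nat.zero_le _) _
  | exact M₁ M₂ M₃ f g hf hg hfg h₁ h₃ =>
    exact subsingleton_ext_X₂ (ModuleCat.shortComplex_shortExact
      (ModuleCat.shortComplexOfCompEqZero f g hfg.linearMap_comp_eq_zero) hfg hf hg) _ h₁ h₃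
  | quotient M p e =>
    by_cases hp : p.1 = IsLocalRing.maximalIdeal A
    · rw [← hp] at hk
      exact subsingleton_ext_of_iso e.toModuleIso N _ hk
    · obtain ⟨y, hy, hyp⟩ := SetLike.exists_of_lt
        ((IsLocalRing.le_maximalIdeal_of_isPrime p.1).lt_of_ne hp)
      refine subsingleton_ext_of_smulShortComplex (M := ModuleCat.of A M) (y := y) ?_ ?_ _
        (hN.subsingleton _ _ _ le_rfl _)
      · rwa [IsLocalRing.ringJacobson_eq_maximalIdeal]
      · refine .of_injective e e.injective
          ((isSMulRegular_algebraMap_iff (A ⧸ p.1)).1 (.of_ne_zero ?_))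
        exact mt Ideal.Quotient.eq_zero_iff_mem.1 hyp

theorem hasInjectiveDimensionLE_of_maximalIdeal_mem_associatedPrimes [Module.Finite A N]
    {d n : ℕ} (hM : IsLocalRing.maximalIdeal A ∈ associatedPrimes A M)
    (hd : HasProjectiveDimensionLE M d) (hN : HasInjectiveDimensionLE N n) :
    HasInjectiveDimensionLE N d := by
  obtain ⟨-, f, hf⟩ := isAssociatedPrime_iff_exists_injective_linearMap _ _ |>.1 hM
  induction n with
  | zero =>
    have : HasInjectiveDimensionLT N 1 := hN
    exact hasInjectiveDimensionLT_of_ge N 1 (d + 1) (by lia)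
  | succ j ih =>
    obtain hjd | hdj := le_or_gt (j + 1) d
    · have : HasInjectiveDimensionLT N (j + 2) := hN
      exact hasInjectiveDimensionLT_of_ge N (j + 2) (d + 1) (by lia)
    · have : HasProjectiveDimensionLT M (d + 1) := hd
      exact ih <| hasInjectiveDimensionLE_of_succ j hN <| subsingleton_ext_of_injective hf (j + 1)
        (hasProjectiveDimensionLT_of_ge M (d + 1) (j + 1) (by lia)) hN

theorem maximalIdeal_mem_associatedPrimes_of_disjoint_nonZeroDivisors
    (h : Disjoint (IsLocalRing.maximalIdeal A : Set A) (nonZeroDivisors A)) :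
    IsLocalRing.maximalIdeal A ∈ associatedPrimes A A := by
  obtain ⟨P, hP, hle⟩ : ∃ P ∈ associatedPrimes A A, IsLocalRing.maximalIdeal A ≤ P :=
    (Ideal.subset_union_prime_finite (associatedPrimes.finite ..) (f := id) 0 0
      fun _ h _ _ ↦ h.1).1 <|
        biUnion_associatedPrimes_eq_compl_nonZeroDivisors A ▸ h.subset_compl_right
  rwa [(IsLocalRing.maximalIdeal.isMaximal A).eq_of_le hP.1.ne_top hle]

end DepthDescent

section KrullDimOne

theorem isMaximal_of_mem_nonZeroDivisors_s16 {A : Type*} [CommRing A] [Ring.KrullDimLE 1 A] {x : A}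
    (hx : x ∈ nonZeroDivisors A) (p : Ideal A) [hp : p.IsPrime] (hxp : x ∈ p) : p.IsMaximal :=
  (Ring.krullDimLE_one_iff.1 inferInstance p hp).resolve_left fun h ↦
    Set.disjoint_left.1 (Ideal.disjoint_nonZeroDivisors_of_mem_minimalPrimes h) hxp hx

variable {A : Type u} [CommRing A]

open Pointwise in
theorem maximalIdeal_mem_associatedPrimes_quotient_smul_top [IsNoetherianRing A] [IsLocalRing A]
    [Ring.KrullDimLE 1 A] {x : A} (hx : x ∈ nonZeroDivisors A)
    (hxm : x ∈ IsLocalRing.maximalIdeal A) :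
    IsLocalRing.maximalIdeal A ∈ associatedPrimes A (A ⧸ x • (⊤ : Ideal A)) := by
  have hne : x • (⊤ : Ideal A) ≠ ⊤ := (Ideal.ne_top_iff_one _).2 fun h ↦ by
    obtain ⟨a, -, ha⟩ := Submodule.mem_smul_pointwise_iff_exists _ _ _ |>.1 h
    exact (IsLocalRing.mem_maximalIdeal x).1 hxm (.of_mul_eq_one a ha)
  have : Nontrivial (A ⧸ x • (⊤ : Ideal A)) := Submodule.Quotient.nontrivial_iff.2 hne
  obtain ⟨P, hP⟩ := associatedPrimes.nonempty A (A ⧸ x • (⊤ : Ideal A))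
  have hxP : x ∈ P := hP.annihilator_le <| by
    rw [Submodule.annihilator_top, Ideal.annihilator_quotient]
    exact ⟨1, trivial, mul_one x⟩
  have := hP.1
  rwa [← IsLocalRing.eq_maximalIdeal (isMaximal_of_mem_nonZeroDivisors_s16 hx P hxP)]

theorem exists_hasProjectiveDimensionLE_one_maximalIdeal_mem_associatedPrimes
    (A : Type u) [CommRing A] [IsNoetherianRing A] [IsLocalRing A] [Ring.KrullDimLE 1 A] :
    ∃ M : ModuleCat.{u} A, HasProjectiveDimensionLE M 1 ∧
      IsLocalRing.maximalIdeal A ∈ associatedPrimes A M := by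
  by_cases h : Disjoint (IsLocalRing.maximalIdeal A : Set A) (nonZeroDivisors A)
  · exact ⟨ModuleCat.of A A, inferInstance,
      maximalIdeal_mem_associatedPrimes_of_disjoint_nonZeroDivisors h⟩
  · obtain ⟨x, hxm, hx⟩ := Set.not_disjoint_iff.1 h
    have hreg : IsSMulRegular (ModuleCat.of A A) x :=
      isLeftRegular_iff.1 (isRegular_iff_mem_nonZeroDivisors.2 hx).left
    have : HasProjectiveDimensionLT (ModuleCat.of A A) 1 := inferInstance
    exact ⟨((ModuleCat.of A A).smulShortComplex x).X₃,
      hreg.smulShortComplex_shortExact.hasProjectiveDimensionLT_X₃ 1 this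
        (hasProjectiveDimensionLT_of_ge (ModuleCat.of A A) 1 2 (by lia)),
      maximalIdeal_mem_associatedPrimes_quotient_smul_top hx hxm⟩

theorem IsGorensteinLocalRing.hasInjectiveDimensionLE_one [Ring.KrullDimLE 1 A]
    (h : IsGorensteinLocalRing A) : HasInjectiveDimensionLE (ModuleCat.of A A) 1 := by
  obtain ⟨_, _, n, hn⟩ := isGorensteinLocalRing_iff.1 h
  obtain ⟨M, hM, hm⟩ :=
    exists_hasProjectiveDimensionLE_one_maximalIdeal_mem_associatedPrimes A
  exact hasInjectiveDimensionLE_of_maximalIdeal_mem_associatedPrimes hm hM hn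

end KrullDimOne

section GorensteinRing

theorem krullDimLE_of_strictMono_comap {A B : Type*} [CommRing A] [CommRing B] {f : A →+* B}
    (hf : StrictMono (PrimeSpectrum.comap f)) (n : ℕ) [Ring.KrullDimLE n A] :
    Ring.KrullDimLE n B :=
  ⟨(Order.krullDim_le_of_strictMono _ hf).trans Order.KrullDimLE.krullDim_le⟩

theorem krullDimLE_of_isLocalization {A : Type*} [CommRing A] (M : Submonoid A) (B : Type*)
    [CommRing B] [Algebra A B] [IsLocalization M B] (n : ℕ) [Ring.KrullDimLE n A] :
    Ring.KrullDimLE n B :=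
  krullDimLE_of_strictMono_comap
    (Monotone.strictMono_of_injective (fun _ _ h ↦ Ideal.comap_mono h)
      (PrimeSpectrum.localization_comap_injective B M)) n

theorem krullDimLE_of_isIntegral_s16 (A B : Type*) [CommRing A] [CommRing B] [Algebra A B]
    [Algebra.IsIntegral A B] (n : ℕ) [Ring.KrullDimLE n A] : Ring.KrullDimLE n B :=
  krullDimLE_of_strictMono_comap (f := algebraMap A B)
    (fun _ _ h ↦ Ideal.IsIntegral.comap_lt_comap h) n

variable {A : Type u} [CommRing A]

theorem hasInjectiveDimensionLE_localizedModule_iff (M : Submonoid A) {X : ModuleCat.{u} A}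
    {Y : Type u} [AddCommGroup Y] [Module A Y] [Module (Localization M) Y]
    [IsScalarTower A (Localization M) Y] (f : X →ₗ[A] Y) [IsLocalizedModule M f] (n : ℕ) :
    HasInjectiveDimensionLE (X.localizedModule M) n ↔
      HasInjectiveDimensionLE (ModuleCat.of (Localization M) Y) n :=
  ModuleCat.hasInjectiveDimensionLE_iff_of_linearEquiv (M := X.localizedModule M)
    (N := ModuleCat.of (Localization M) Y) (.extendScalarsOfIsLocalization M (Localization M)
      (IsLocalizedModule.linearEquiv M (X.localizedModuleMkLinearMap M) f)) n

theorem hasInjectiveDimensionLE_localizedModule_self_iff (M : Submonoid A) (n : ℕ) :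
    HasInjectiveDimensionLE ((ModuleCat.of A A).localizedModule M) n ↔
      HasInjectiveDimensionLE (ModuleCat.of (Localization M) (Localization M)) n :=
  hasInjectiveDimensionLE_localizedModule_iff M (X := ModuleCat.of A A)
    (Algebra.linearMap A (Localization M)) n

theorem IsGorensteinLocalRing.localization (h : IsGorensteinLocalRing A) (p : Ideal A)
    [p.IsPrime] : IsGorensteinLocalRing (Localization.AtPrime p) := by
  obtain ⟨_, _, n, hn⟩ := isGorensteinLocalRing_iff.1 h
  exact isGorensteinLocalRing_iff.2 ⟨inferInstance, IsLocalization.isNoetherianRing p.primeCompl _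
    inferInstance, n, (hasInjectiveDimensionLE_localizedModule_self_iff p.primeCompl n).1
      (ModuleCat.localizedModule_hasInjectiveDimensionLE n p.primeCompl _)⟩

theorem IsGorensteinLocalRing.isGorensteinRing (h : IsGorensteinLocalRing A) :
    IsGorensteinRing A :=
  ⟨h.2.1, fun m _ ↦ h.localization m⟩

theorem isGorensteinRing_iff_hasInjectiveDimensionLE_one [IsNoetherianRing A]
    [Ring.KrullDimLE 1 A] :
    IsGorensteinRing A ↔ HasInjectiveDimensionLE (ModuleCat.of A A) 1 := by
  rw [ModuleCat.hasInjectiveDimensionLE_iff_forall_maximalSpectrum]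
  refine ⟨fun h p ↦ ?_, fun h ↦ ⟨inferInstance, fun m hm ↦ ?_⟩⟩
  · have := krullDimLE_of_isLocalization p.1.primeCompl (Localization.AtPrime p.1) 1
    exact (hasInjectiveDimensionLE_localizedModule_self_iff _ 1).2
      (h.2 p.1).hasInjectiveDimensionLE_one
  · exact isGorensteinLocalRing_iff.2 ⟨inferInstance,
      IsLocalization.isNoetherianRing m.primeCompl _ inferInstance, 1,
      (hasInjectiveDimensionLE_localizedModule_self_iff _ 1).1 (h ⟨m, hm⟩)⟩

end GorensteinRing

section ExtensionFromKernels

variable {A : Type u} [CommRing A] {N : Type u} [AddCommGroup N] [Module A N]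

theorem exists_comp_subtype_ker_eq {F G : Type u} [AddCommGroup F] [Module A F] [AddCommGroup G]
    [Module A G] [Module.Projective A G] (hN : HasInjectiveDimensionLE (ModuleCat.of A N) 1)
    (θ : F →ₗ[A] G) (φ : θ.ker →ₗ[A] N) : ∃ ψ : F →ₗ[A] N, ψ ∘ₗ θ.ker.subtype = φ := by
  have hext := subsingleton_ext_of_injective (f := θ.ker.liftQ θ le_rfl)
    (LinearMap.ker_eq_bot.1 (Submodule.ker_liftQ_eq_bot _ _ _ le_rfl)) 1 inferInstance hN
  obtain ⟨ψ, hψ⟩ := exists_comp_eq_of_subsingleton_ext_one (shortExact_subtype_mkQ θ.ker) hext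
    (ModuleCat.ofHom φ)
  exact ⟨ψ.hom, ModuleCat.hom_ext_iff.1 hψ⟩

theorem hasInjectiveDimensionLE_one_of_forall_exists_comp_subtype_ker_eq
    (h : ∀ (F : Type u) [AddCommGroup F] [Module A F] (θ : F →ₗ[A] A) (φ : θ.ker →ₗ[A] N),
      ∃ ψ : F →ₗ[A] N, ψ ∘ₗ θ.ker.subtype = φ) :
    HasInjectiveDimensionLE (ModuleCat.of A N) 1 := by
  refine hasInjectiveDimensionLE_of_forall_ideal 1 _ fun I ↦ ?_
  have hI : Subsingleton (Abelian.Ext (ModuleCat.of A I) (ModuleCat.of A N) 1) := by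
    let π : (I →₀ A) →ₗ[A] I := Finsupp.linearCombination A id
    have hker : (I.subtype ∘ₗ π).ker = π.ker :=
      LinearMap.ker_comp_of_ker_eq_bot π I.ker_subtype
    refine subsingleton_ext_one_of_forall_exists_comp_eq (LinearMap.shortExact_shortComplexKer
      (Finsupp.linearCombination_id_surjective A I)) fun φ ↦ ?_
    obtain ⟨ψ, hψ⟩ := h _ (I.subtype ∘ₗ π) (φ.hom ∘ₗ Submodule.inclusion hker.le)
    exact ⟨ModuleCat.ofHom ψ, ModuleCat.hom_ext <| LinearMap.ext fun x ↦
      LinearMap.congr_fun hψ (Submodule.inclusion hker.ge x)⟩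
  exact subsingleton_ext_X₃ (shortExact_subtype_mkQ I) 1 hI
    (HasProjectiveDimensionLT.subsingleton (ModuleCat.of A A) 1 2 (by lia) _)

end ExtensionFromKernels

section DoubleDual

theorem exists_smul_eq_of_forall_dvd {A M : Type*} [CommRing A] [AddCommGroup M] [Module A M]
    {z : A} (hz : z ∈ nonZeroDivisors A) (f : M →ₗ[A] A) (hf : ∀ m, z ∣ f m) :
    ∃ φ : M →ₗ[A] A, z • φ = f := by
  have hinj : Function.Injective (LinearMap.mulLeft A z) :=
    (isRegular_iff_mem_nonZeroDivisors.2 hz).left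
  let φ := (LinearEquiv.ofInjective _ hinj).symm.toLinearMap ∘ₗ
    f.codRestrict (LinearMap.mulLeft A z).range fun m ↦ (hf m).imp fun _ h ↦ h.symm
  exact ⟨φ, LinearMap.ext fun m ↦
    congr_arg Subtype.val ((LinearEquiv.ofInjective _ hinj).apply_symm_apply _)⟩

theorem mem_colon_span_range_of_smul_eq_smul {A : Type*} [CommRing A] {n : ℕ} {z : A}
    {g v : Fin n → A} {b : A} (h : z • v = b • g) :
    b ∈ (Ideal.span {z}).colon (Ideal.span (Set.range g) : Set A) := by
  rw [Ideal.colon_span, Submodule.mem_colon]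
  rintro _ ⟨i, rfl⟩
  exact Ideal.mem_span_singleton.2 ⟨v i, (congr_fun h i).symm⟩

variable {A : Type u} [CommRing A] [IsNoetherianRing A]

-- The ideal-theoretic form of the fact that `A ⧸ zA` is an injective module over itself.
theorem span_singleton_colon_colon (hA : HasInjectiveDimensionLE (ModuleCat.of A A) 1)
    {I : Ideal A} {z : A} (hz : z ∈ nonZeroDivisors A) (hzI : z ∈ I) :
    (Ideal.span {z}).colon ((Ideal.span {z}).colon (I : Set A) : Set A) = I := by
  refine le_antisymm (fun y hy ↦ ?_) fun y hy ↦ Submodule.mem_colon.2 fun b hb ↦ by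
    simpa [mul_comm] using Submodule.mem_colon.1 hb y hy
  obtain ⟨n, g, rfl⟩ :=
    Submodule.fg_iff_exists_fin_generating_family.1 (IsNoetherian.noetherian I)
  obtain ⟨a, ha⟩ := (Submodule.mem_span_range_iff_exists_fun A).1 hzI
  let c : (Fin n → A) →ₗ[A] A := Fintype.linearCombination A a
  let θ : (Fin n → A) →ₗ[A] (Fin n → A) := z • LinearMap.id - c.smulRight g
  have hdvd (v : θ.ker) : z ∣ y * c v :=
    Ideal.mem_span_singleton.1 <| Submodule.mem_colon.1 hy _ <|
      mem_colon_span_range_of_smul_eq_smul (sub_eq_zero.1 v.2)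
  obtain ⟨φ, hφ⟩ := exists_smul_eq_of_forall_dvd hz (y • c ∘ₗ θ.ker.subtype) hdvd
  obtain ⟨ψ, rfl⟩ := exists_comp_subtype_ker_eq hA θ φ
  have hcg : c g = z := by simp [c, Fintype.linearCombination_apply, ← ha, mul_comm]
  have hψ : z * ψ g = z * y := by
    simpa [hcg, mul_comm y] using LinearMap.congr_fun hφ ⟨g, by simp [θ, hcg]⟩
  rw [← (isRegular_iff_mem_nonZeroDivisors.2 hz).left hψ, ψ.pi_apply_eq_sum_univ]
  exact sum_mem fun i _ ↦ Ideal.mul_mem_right _ _ (Ideal.subset_span ⟨i, rfl⟩)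

variable {Q : Type*} [CommRing Q] [Algebra A Q] [FaithfulSMul A Q]

theorem one_div_one_div_eq_self (hA : HasInjectiveDimensionLE (ModuleCat.of A A) 1)
    {N : Submodule A Q} {x r : A} (hx : IsUnit (algebraMap A Q x))
    (hr : IsUnit (algebraMap A Q r)) (hxN : algebraMap A Q x ∈ N)
    (hrN : algebraMap A Q r ∈ 1 / N) : 1 / (1 / N) = N := by
  refine le_antisymm (fun q hq ↦ ?_) (Submodule.le_div_iff_mul_le.2 ?_)
  · obtain ⟨r', hr'⟩ := hr.exists_left_inv
    obtain ⟨x', hx'⟩ := hx.exists_left_inv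
    let I : Ideal A := N.comap (LinearMap.mulLeft A r' ∘ₗ Algebra.linearMap A Q)
    have hz : r * x ∈ nonZeroDivisors A := mem_nonZeroDivisors_of_injective
      (FaithfulSMul.algebraMap_injective A Q) (map_mul (algebraMap A Q) r x ▸
        (hr.mul hx).mem_nonZeroDivisors)
    have hzI : r * x ∈ I := by simpa [I, ← mul_assoc, hr'] using hxN
    obtain ⟨y, hy⟩ := Submodule.mem_one.1 (Submodule.mem_div_iff_forall_mul_mem.1 hq _ hrN)
    suffices hyI : y ∈ I by simpa [I, hy, mul_left_comm, hr'] using hyI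
    rw [← span_singleton_colon_colon hA hz hzI]
    refine Submodule.mem_colon.2 fun b hb ↦ Ideal.mem_span_singleton.2 ?_
    have hbN : x' * algebraMap A Q b ∈ 1 / N :=
      Submodule.mem_div_iff_forall_mul_mem.2 fun n hn ↦ by
        obtain ⟨i, hi⟩ := Submodule.mem_one.1 (Submodule.mem_div_iff_forall_mul_mem.1 hrN n hn)
        have hiI : i ∈ I := by simpa [I, hi, ← mul_assoc, hr'] using hn
        obtain ⟨w, hw⟩ := Ideal.mem_span_singleton.1 (Submodule.mem_colon.1 hb i hiI)
        have := congr_arg (algebraMap A Q) hw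
        simp only [smul_eq_mul, map_mul, hi] at this
        have hbn : algebraMap A Q b * n = algebraMap A Q x * algebraMap A Q w :=
          hr.mul_left_cancel (by linear_combination this)
        exact Submodule.mem_one.2 ⟨w, by linear_combination -algebraMap A Q w * hx' - x' * hbn⟩
    obtain ⟨t, ht⟩ := Submodule.mem_one.1 (Submodule.mem_div_iff_forall_mul_mem.1 hq _ hbN)
    refine ⟨t, FaithfulSMul.algebraMap_injective A Q ?_⟩
    simp only [smul_eq_mul, map_mul, hy, ht]
    linear_combination (-(algebraMap A Q r * algebraMap A Q b * q)) * hx'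
  · exact mul_comm N (1 / N) ▸ Submodule.le_div_iff_mul_le.1 le_rfl

end DoubleDual

section CanonicalModule

variable {R S : Type u} [CommRing R] [CommRing S] [Algebra R S] {e : S ≃ₗ[R] (S →ₗ[R] R)}

theorem exists_linearMap_apply_one_eq (he : ∀ s t, e s t = e 1 (s * t)) {F : Type*}
    [AddCommGroup F] [Module R F] [Module S F] [IsScalarTower R S F] (h : F →ₗ[R] R) :
    ∃ ψ : F →ₗ[S] S, ∀ f, e 1 (ψ f) = h f := by
  let ev (f : F) : S →ₗ[R] R := h ∘ₗ (LinearMap.toSpanSingleton S F f).restrictScalars R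
  refine ⟨⟨⟨fun f ↦ e.symm (ev f), fun f g ↦ ?_⟩, fun s f ↦ ?_⟩, fun f ↦ ?_⟩
  · rw [← map_add]
    exact congr_arg e.symm (LinearMap.ext fun t ↦ by simp [ev])
  · rw [LinearEquiv.symm_apply_eq]
    ext t
    rw [he, RingHom.id_apply, smul_eq_mul, mul_right_comm, mul_comm, ← he]
    simp [ev, mul_smul, smul_comm s t]
  · change e 1 (e.symm (ev f)) = h f
    rw [← mul_one (e.symm _), ← he]
    simp [ev]

-- Adjunction: an `S`-linear map into `S ≅ Hom_R(S, R)` is an `R`-linear map into `R`.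
theorem hasInjectiveDimensionLE_one_of_linearEquiv_linearMap
    (hR : HasInjectiveDimensionLE (ModuleCat.of R R) 1) (he : ∀ s t, e s t = e 1 (s * t))
    {ι : S →ₗ[R] R} (hι : Function.Injective ι) :
    HasInjectiveDimensionLE (ModuleCat.of S S) 1 := by
  refine hasInjectiveDimensionLE_one_of_forall_exists_comp_subtype_ker_eq fun F _ _ θ φ ↦ ?_
  let _ : Module R F := Module.compHom F (algebraMap R S)
  have : IsScalarTower R S F := .of_algebraMap_smul fun _ _ ↦ rfl
  have hker : (ι ∘ₗ θ.restrictScalars R).ker = θ.ker.restrictScalars R :=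
    (LinearMap.ker_comp_of_ker_eq_bot _ (LinearMap.ker_eq_bot.2 hι)).trans
      (LinearMap.ker_restrictScalars R θ)
  let φR : θ.ker.restrictScalars R →ₗ[R] R := e 1 ∘ₗ φ.restrictScalars R
  obtain ⟨h, hh⟩ := exists_comp_subtype_ker_eq hR (ι ∘ₗ θ.restrictScalars R)
    (φR ∘ₗ Submodule.inclusion hker.le)
  obtain ⟨ψ, hψ⟩ := exists_linearMap_apply_one_eq he h
  have hφ (x : θ.ker) : e 1 (ψ x) = e 1 (φ x) :=
    (hψ x).trans (LinearMap.congr_fun hh (Submodule.inclusion hker.ge x))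
  refine ⟨ψ, LinearMap.ext fun x ↦ e.injective <| LinearMap.ext fun s ↦ ?_⟩
  rw [he, he (φ x), mul_comm, mul_comm (φ x)]
  simpa using hφ (s • x)

end CanonicalModule

section FractionalIdeals

variable {A Q : Type*} [CommRing A] [CommRing Q] [Algebra A Q]

theorem apply_mul_comm_of_isLocalization (M : Submonoid A) [IsLocalization M Q]
    {N : Submodule A Q} (φ : N →ₗ[A] Q) (n n' : N) : φ n * n' = φ n' * n := by
  obtain ⟨⟨a, s⟩, hs⟩ := IsLocalization.surj M (n : Q)
  obtain ⟨⟨a', s'⟩, hs'⟩ := IsLocalization.surj M (n' : Q)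
  have h : (a' * s : A) • n = (a * s' : A) • n' := by
    refine Subtype.ext ?_
    simp only [Submodule.coe_smul, Algebra.smul_def, map_mul]
    linear_combination algebraMap A Q a' * hs - algebraMap A Q a * hs'
  have hφ := congr_arg φ h
  simp only [map_smul, Algebra.smul_def, map_mul] at hφ
  refine ((IsLocalization.map_units Q s).mul (IsLocalization.map_units Q s')).mul_left_cancel ?_
  linear_combination hφ + algebraMap A Q s * φ n * hs' - algebraMap A Q s' * φ n' * hs

theorem nonempty_div_linearEquiv (M : Submonoid A) [IsLocalization M Q] {N : Submodule A Q}
    (N' : Submodule A Q) {x : Q} (hx : IsUnit x) (hxN : x ∈ N) :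
    Nonempty (↥(N' / N) ≃ₗ[A] (N →ₗ[A] N')) := by
  let F : ↥(N' / N) →ₗ[A] (N →ₗ[A] N') :=
    LinearMap.mk₂ A (fun q n ↦ ⟨q * n, Submodule.mem_div_iff_forall_mul_mem.1 q.2 n n.2⟩)
      (fun q q' n ↦ Subtype.ext (add_mul _ _ _)) (fun a q n ↦ Subtype.ext (smul_mul_assoc _ _ _))
      (fun q n n' ↦ Subtype.ext (mul_add _ _ _)) (fun a q n ↦ Subtype.ext (mul_smul_comm _ _ _))
  refine ⟨LinearEquiv.ofBijective F ⟨fun q q' h ↦ Subtype.ext <| hx.mul_right_cancel <|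
    congr_arg Subtype.val (LinearMap.congr_fun h ⟨x, hxN⟩), fun φ ↦ ?_⟩⟩
  obtain ⟨x', hx'⟩ := hx.exists_right_inv
  have hφ (n : N) : φ ⟨x, hxN⟩ * x' * n = (φ n : Q) := by
    have := apply_mul_comm_of_isLocalization M (N'.subtype ∘ₗ φ) n ⟨x, hxN⟩
    simp only [LinearMap.comp_apply, Submodule.subtype_apply] at this
    linear_combination (φ n : Q) * hx' - x' * this
  exact ⟨⟨_, Submodule.mem_div_iff_forall_mul_mem.2 fun n hn ↦ hφ ⟨n, hn⟩ ▸ (φ _).2⟩,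
    LinearMap.ext fun n ↦ Subtype.ext (hφ n)⟩

theorem one_div_one_submodule : (1 : Submodule A Q) / 1 = 1 :=
  le_antisymm ((mul_one _).symm.le.trans (Submodule.le_div_iff_mul_le.1 le_rfl))
    (Submodule.one_le_one_div.2 le_rfl)

end FractionalIdeals

section InvertibleFractionalIdeals

variable {A : Type u} {Q : Type*} [CommRing A] [CommRing Q] [Algebra A Q] [FaithfulSMul A Q]

theorem mul_one_div_eq_one_of_div_self_eq_one_s16 [IsNoetherianRing A]
    (hA : HasInjectiveDimensionLE (ModuleCat.of A A) 1) {N : Submodule A Q} {x r : A}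
    (hx : IsUnit (algebraMap A Q x)) (hr : IsUnit (algebraMap A Q r)) (hxN : algebraMap A Q x ∈ N)
    (hrN : algebraMap A Q r ∈ 1 / N) (hN : N / N = 1) : N * (1 / N) = 1 := by
  have hle : 1 / (N * (1 / N)) ≤ N / N := by
    rw [Submodule.le_div_iff_mul_le]
    calc 1 / (N * (1 / N)) * N ≤ 1 / (1 / N) := by
          rw [Submodule.le_div_iff_mul_le, mul_assoc]
          exact Submodule.le_div_iff_mul_le.1 le_rfl
      _ = N := one_div_one_div_eq_self hA hx hr hxN hrN
  have hone : 1 / (N * (1 / N)) = 1 :=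
    le_antisymm (hle.trans hN.le) (Submodule.one_le_one_div.2 Submodule.mul_one_div_le_one)
  rw [← one_div_one_div_eq_self (N := N * (1 / N)) (x := x * r) (r := 1) hA, hone,
    one_div_one_submodule]
  · simpa only [map_mul] using hx.mul hr
  · simp
  · simpa only [map_mul] using Submodule.mul_mem_mul hxN hrN
  · simpa using Submodule.mul_one_div_le_one

theorem nonempty_linearEquiv_of_mul_eq_one [Finite (MaximalSpectrum A)] {N N' : Submodule A Q}
    (h : N * N' = 1) : Nonempty (N ≃ₗ[A] A) :=
  have : Module.Invertible A N :=
    inferInstanceAs (Module.Invertible A (Units.mkOfMulEqOne N N' h : Submodule A Q))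
  Module.Invertible.free_iff_linearEquiv.1 inferInstance

end InvertibleFractionalIdeals

theorem finite_maximalSpectrum_of_finite_s16 (A B : Type*) [CommRing A] [CommRing B] [Algebra A B]
    [Module.Finite A B] [Finite (MaximalSpectrum A)] : Finite (MaximalSpectrum B) := by
  refine (MaximalSpectrum.equivSubtype B).finite_iff.2 <| Set.Finite.to_subtype <|
    (Set.finite_iUnion fun m : MaximalSpectrum A ↦
      Algebra.QuasiFinite.finite_primesOver (S := B) m.asIdeal).subset fun n (hn : n.IsMaximal) ↦ ?_
  exact Set.mem_iUnion.2 ⟨⟨n.under A, Ideal.isMaximal_comap_of_isIntegral_of_isMaximal n⟩,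
    hn.isPrime, ⟨rfl⟩⟩

section Conductor

variable {R : Type u} [CommRing R] {S : Subalgebra R (FractionRing R)}

theorem mem_conductorFrac {q : FractionRing R} :
    q ∈ conductorFrac R S ↔ ∀ s ∈ S, q * s ∈ (1 : Submodule R (FractionRing R)) :=
  Submodule.mem_div_iff_forall_mul_mem

theorem mul_mem_conductorFrac {c s : FractionRing R} (hc : c ∈ conductorFrac R S) (hs : s ∈ S) :
    c * s ∈ conductorFrac R S :=
  mem_conductorFrac.2 fun t ht ↦ by
    simpa only [mul_assoc] using mem_conductorFrac.1 hc _ (S.mul_mem hs ht)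

variable (S)

theorem exists_algebraMap_mem_conductorFrac [Module.Finite R S] :
    ∃ r ∈ nonZeroDivisors R, algebraMap R (FractionRing R) r ∈ conductorFrac R S := by
  have hfg : (Subalgebra.toSubmodule S).FG := Module.Finite.iff_fg.1 ‹_›
  obtain ⟨r, hr, h⟩ := FractionalIdeal.isFractional_of_fg (S := nonZeroDivisors R) hfg
  refine ⟨r, hr, mem_conductorFrac.2 fun s hs ↦ ?_⟩
  rw [← Algebra.smul_def]
  exact Submodule.mem_one.2 (h s hs)

theorem conductorFrac_div_self [IsNoetherianRing R] [Module.Finite R S]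
    (hR : HasInjectiveDimensionLE (ModuleCat.of R R) 1) :
    conductorFrac R S / conductorFrac R S = Subalgebra.toSubmodule S := by
  obtain ⟨r, hr, hrC⟩ := exists_algebraMap_mem_conductorFrac S
  have hSS : 1 / conductorFrac R S = Subalgebra.toSubmodule S :=
    one_div_one_div_eq_self hR (x := 1) (by simp) (IsLocalization.map_units _ ⟨r, hr⟩)
      (by simp) hrC
  refine le_antisymm (fun q hq ↦ ?_) fun s hs c hc ↦ mul_comm c s ▸ mul_mem_conductorFrac hc hs
  rw [← hSS]
  exact fun c hc ↦ by simpa using mem_conductorFrac.1 (hq c hc) 1 S.one_mem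

theorem nonempty_conductorFrac_linearEquiv_linearMap :
    Nonempty (conductorFrac R S ≃ₗ[R] (S →ₗ[R] R)) := by
  obtain ⟨e⟩ := nonempty_div_linearEquiv (nonZeroDivisors R) (N := Subalgebra.toSubmodule S) 1
    isUnit_one S.one_mem
  let e₁ : (1 : Submodule R (FractionRing R)) ≃ₗ[R] R :=
    .trans (.ofEq _ _ Submodule.one_eq_range)
      (.symm (.ofInjective _ (FaithfulSMul.algebraMap_injective R (FractionRing R))))
  exact ⟨e.trans e₁.congrRight⟩

theorem nonempty_linearEquiv_conductorFrac_end [IsNoetherianRing R] [Module.Finite R S]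
    (hR : HasInjectiveDimensionLE (ModuleCat.of R R) 1) :
    Nonempty (S ≃ₗ[R] (conductorFrac R S →ₗ[R] conductorFrac R S)) := by
  obtain ⟨r, hr, hrC⟩ := exists_algebraMap_mem_conductorFrac S
  obtain ⟨e⟩ := nonempty_div_linearEquiv (nonZeroDivisors R) (conductorFrac R S)
    (IsLocalization.map_units _ ⟨r, hr⟩) hrC
  exact ⟨(LinearEquiv.ofEq _ _ (conductorFrac_div_self S hR).symm).trans e⟩

/-- The conductor of `S`, as a module over `S`. -/
noncomputable def conductorFracExtension : Submodule S (FractionRing R) where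
  __ := (conductorFrac R S).toAddSubmonoid
  smul_mem' s c hc := by
    rw [Subalgebra.smul_def, smul_eq_mul, mul_comm]
    exact mul_mem_conductorFrac hc s.2

theorem conductorFracExtension_div_self [IsNoetherianRing R] [Module.Finite R S]
    (hR : HasInjectiveDimensionLE (ModuleCat.of R R) 1) :
    conductorFracExtension S / conductorFracExtension S = 1 := by
  ext q
  have hq := SetLike.ext_iff.1 (conductorFrac_div_self S hR) q
  exact hq.trans ⟨fun h ↦ Submodule.mem_one.2 ⟨⟨q, h⟩, rfl⟩, fun h ↦ by
    obtain ⟨s, rfl⟩ := Submodule.mem_one.1 h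
    exact s.2⟩

theorem one_mem_one_div_conductorFracExtension : 1 ∈ 1 / conductorFracExtension S :=
  Submodule.one_mem_div.2 fun c hc ↦ by
    obtain ⟨r, hr⟩ := Submodule.mem_one.1 (mem_conductorFrac.1 hc 1 S.one_mem)
    exact Submodule.mem_one.2 ⟨algebraMap R S r, hr.trans (mul_one c)⟩

theorem nonempty_linearEquiv_conductorFrac [IsNoetherianRing R] [Finite (MaximalSpectrum R)]
    [Module.Finite R S] (hR : HasInjectiveDimensionLE (ModuleCat.of R R) 1)
    (hS : HasInjectiveDimensionLE (ModuleCat.of S S) 1) :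
    Nonempty (S ≃ₗ[R] conductorFrac R S) := by
  have : IsNoetherianRing S := .of_finite R S
  have := finite_maximalSpectrum_of_finite_s16 R S
  obtain ⟨r, hr, hrC⟩ := exists_algebraMap_mem_conductorFrac S
  obtain ⟨e⟩ := nonempty_linearEquiv_of_mul_eq_one <|
    mul_one_div_eq_one_of_div_self_eq_one_s16 hS (N := conductorFracExtension S)
      (x := algebraMap R S r) (r := 1)
      (IsLocalization.map_units (FractionRing R) (⟨r, hr⟩ : nonZeroDivisors R)) (by simp) hrC
      (by simpa using one_mem_one_div_conductorFracExtension S)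
      (conductorFracExtension_div_self S hR)
  exact ⟨e.symm.restrictScalars R⟩

theorem exists_injective_linearMap [Module.Finite R S] :
    ∃ ι : S →ₗ[R] R, Function.Injective ι := by
  obtain ⟨r, hr, hrC⟩ := exists_algebraMap_mem_conductorFrac S
  let mulr : S →ₗ[R] FractionRing R :=
    LinearMap.mulLeft R (algebraMap R (FractionRing R) r) ∘ₗ S.val.toLinearMap
  have hmulr : Function.Injective mulr :=
    (IsLocalization.map_units _ (⟨r, hr⟩ : nonZeroDivisors R)).mul_right_injective.comp
      Subtype.val_injective
  have hinj := FaithfulSMul.algebraMap_injective R (FractionRing R)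
  let toRange := LinearEquiv.ofInjective (Algebra.linearMap R (FractionRing R)) hinj
  let ι := mulr.codRestrict (Algebra.linearMap R (FractionRing R)).range fun s ↦
    Submodule.mem_one.1 (mem_conductorFrac.1 hrC s s.2)
  have hι : Function.Injective ι := fun _ _ h ↦ hmulr (Subtype.ext_iff.1 h)
  exact ⟨toRange.symm.toLinearMap ∘ₗ ι, toRange.symm.injective.comp hι⟩

variable {S}

theorem algebraMap_apply_eq_mul (ψ : S →ₗ[R] R) (s : S) :
    algebraMap R (FractionRing R) (ψ s) = algebraMap R (FractionRing R) (ψ 1) * s := by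
  simpa using apply_mul_comm_of_isLocalization (nonZeroDivisors R)
    (N := Subalgebra.toSubmodule S) (Algebra.linearMap R (FractionRing R) ∘ₗ ψ) s (1 : S)

theorem linearEquiv_linearMap_apply_eq_apply_one (e : S ≃ₗ[R] (S →ₗ[R] R)) (s t : S) :
    e s t = e 1 (s * t) := by
  have h₁ := algebraMap_apply_eq_mul (LinearMap.applyₗ 1 ∘ₗ e.toLinearMap) s
  apply FaithfulSMul.algebraMap_injective R (FractionRing R)
  simp only [LinearMap.comp_apply, LinearEquiv.coe_coe, LinearMap.applyₗ_apply_apply] at h₁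
  rw [algebraMap_apply_eq_mul, algebraMap_apply_eq_mul (e 1), h₁, mul_assoc, S.coe_mul]

end Conductor

theorem gorenstein_iff_selfdual_iff_conductor_stable_general (R : Type u) [CommRing R]
    [Ring.KrullDimLE 1 R] [Finite (MaximalSpectrum R)] (hGor : IsGorensteinRing R)
    (S : Subalgebra R (FractionRing R)) [Module.Finite R S] :
    (IsGorensteinRing S ↔ Nonempty (S ≃ₗ[R] (S →ₗ[R] R))) ∧
    (Nonempty (S ≃ₗ[R] (S →ₗ[R] R)) ↔
      Nonempty (conductorFrac R S ≃ₗ[R] (conductorFrac R S →ₗ[R] conductorFrac R S))) := by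
  have : IsNoetherianRing R := hGor.1
  have : IsNoetherianRing S := .of_finite R S
  have : Ring.KrullDimLE 1 S := krullDimLE_of_isIntegral_s16 R S 1
  have hR := isGorensteinRing_iff_hasInjectiveDimensionLE_one.1 hGor
  rw [isGorensteinRing_iff_hasInjectiveDimensionLE_one]
  obtain ⟨e₁⟩ := nonempty_conductorFrac_linearEquiv_linearMap S
  obtain ⟨e₂⟩ := nonempty_linearEquiv_conductorFrac_end S hR
  refine ⟨⟨fun hS ↦ ?_, fun ⟨e⟩ ↦ ?_⟩, fun ⟨e⟩ ↦ ⟨e₁.trans (e.symm.trans e₂)⟩,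
    fun ⟨e⟩ ↦ ⟨e₂.trans (e.symm.trans e₁)⟩⟩
  · obtain ⟨e⟩ := nonempty_linearEquiv_conductorFrac S hR hS
    exact ⟨e.trans e₁⟩
  · obtain ⟨ι, hι⟩ := exists_injective_linearMap S
    exact hasInjectiveDimensionLE_one_of_linearEquiv_linearMap hR
      (linearEquiv_linearMap_apply_eq_apply_one e) hι

/-- for a module finite birational extension `S` of a 1-dimensional
Gorenstein local ring `R`, the following are equivalent: (i) `S` is Gorenstein;
(ii) `S ≅ Hom_R(S, R)`; (iii) the conductor `c_R(S)` is a stable ideal. -/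
theorem gorenstein_iff_selfdual_iff_conductor_stable (R : Type u) [CommRing R]
    (hGor : IsGorensteinLocalRing R) (hdim : ringKrullDim R = 1)
    (S : Subalgebra R (FractionRing R)) (hfin : Module.Finite R S) :
    (IsGorensteinRing S ↔ Nonempty (S ≃ₗ[R] (S →ₗ[R] R))) ∧
    (Nonempty (S ≃ₗ[R] (S →ₗ[R] R)) ↔
      Nonempty ((↥(conductorFrac R S)) ≃ₗ[R]
        ((↥(conductorFrac R S)) →ₗ[R] (↥(conductorFrac R S))))) := by
  have := hGor.1
  have : Ring.KrullDimLE 1 R := Ring.krullDimLE_iff.2 hdim.le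
  exact gorenstein_iff_selfdual_iff_conductor_stable_general R hGor.isGorensteinRing S
end
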